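/- The family {Q_e, B_v} together with the maps g_e is a branching system for the extended graph E(G), with the Cuntz–Krieger condition at every vertex. Explicitly: (1) μ(Q_e ∩ Q_f) = 0 for distinct edges e, f of E(G); (2) μ(B_u ∩ B_w) = 0 for distinct vertices u, w of E(G); (3) μ(Q_e \ B_{s_E(e)}) = 0 for every edge e of E(G); (4) for every vertex w of E(G) with at least one outgoing edge, B_w coincides with ⋃_{e ∈ s_E⁻¹(w)} Q_e up to a μ-null set (in particular, for r(e) = v ∉ V, R_e coincides up to a μ-null set with the disjoint-up-to-null-sets union Q_e ∪ Q_{e'}); (5) for every edge e of E(G), the restriction of f_{ē} (where ē ∈ G¹ is the underlying unprimed edge) gives maps B_{r_E(e)} → Q_e and Q_e → B_{r_E(e)} that are mutually inverse μ-a.e. and whose pushforward measures of μ restricted to these sets are absolutely continuous with respect to μ. -/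

import Mathlib

open MeasureTheory Set
open scoped ENNReal NNReal

section

variable {V0 E1 X : Type*}

/-- A relative `G`-branching system, relative to a set `V` of vertices, on a measure space
`(X, μ)`, for a directed graph with vertices `V0`, edges `E1`, range map `r` and source map
`s`. The data consists of measurable sets `R e` (for edges) and `D v` (for vertices),
together with measurable maps `f e : D (r e) → R e` and `finv e : R e → D (r e)` that are
mutually inverse `μ`-a.e. and whose pushforward measures are absolutely continuous w.r.t.
`μ`. -/
structure RelBranchingSystem [MeasurableSpace X] (r s : E1 → V0) (V : Set V0)
    (μ : Measure X) (R : E1 → Set X) (D : V0 → Set X) (f finv : E1 → X → X) : Prop where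
  measR : ∀ e, MeasurableSet (R e)
  measD : ∀ v, MeasurableSet (D v)
  measf : ∀ e, Measurable (f e)
  measfinv : ∀ e, Measurable (finv e)
  disjR : ∀ e e', e ≠ e' → μ (R e ∩ R e') = 0
  disjD : ∀ u v, u ≠ v → μ (D u ∩ D v) = 0
  RsubD : ∀ e, μ (R e \ D (s e)) = 0
  CK : ∀ v ∈ V, (∃ e, s e = v) → μ (symmDiff (D v) (⋃ e ∈ {e' | s e' = v}, R e)) = 0
  mapsf : ∀ e, MapsTo (f e) (D (r e)) (R e)
  mapsfinv : ∀ e, MapsTo (finv e) (R e) (D (r e))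
  inv_right : ∀ e, ∀ᵐ x ∂μ.restrict (R e), f e (finv e x) = x
  inv_left : ∀ e, ∀ᵐ t ∂μ.restrict (D (r e)), finv e (f e t) = t
  ac_f : ∀ e, (μ.restrict (D (r e))).map (f e) ≪ μ
  ac_finv : ∀ e, (μ.restrict (R e)).map (finv e) ≪ μ

/-- The Radon–Nikodym derivative of the pushforward of `μ` restricted to `S` under `h`,
with respect to `μ`.  Taking `S = D (r e)`, `h = f e` gives `Φ_{f_e⁻¹}`, and taking
`S = R e`, `h = finv e` gives `Φ_{f_e}`. -/
noncomputable def pushDeriv [MeasurableSpace X] (μ : Measure X) (S : Set X) (h : X → X) :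
    X → ℝ≥0∞ :=
  ((μ.restrict S).map h).rnDeriv μ

/-- The function `x ↦ χ_{R e}(x) · Φ_{f_e⁻¹}(x)^{1/2} · φ(f_e⁻¹ x)`, i.e. the prospective
action of the partial isometry `T_e` on a function `φ`. -/
noncomputable def Taction [MeasurableSpace X] (μ : Measure X) (Re DRe : Set X)
    (fe finve : X → X) (φ : X → ℂ) : X → ℂ :=
  Re.indicator fun x => (Real.sqrt ((pushDeriv μ DRe fe x).toReal) : ℂ) * φ (finve x)

/-- The source map of the extended graph `E(G)` of `(G, V)`: vertices are
`V0 ⊕ {v // v ∉ V}` (the second summand being the added vertices `v'`), edges are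
`E1 ⊕ {e // r e ∉ V}` (the second summand being the added edges `e'`). -/
def sExt (r s : E1 → V0) (V : Set V0) : (E1 ⊕ {e : E1 // r e ∉ V}) → (V0 ⊕ {v : V0 // v ∉ V})
  | Sum.inl e => Sum.inl (s e)
  | Sum.inr ⟨e, _⟩ => Sum.inl (s e)

/-- The range map of the extended graph `E(G)`: `r_E e = r e` and `r_E e' = (r e)'`. -/
def rExt (r : E1 → V0) (V : Set V0) : (E1 ⊕ {e : E1 // r e ∉ V}) → (V0 ⊕ {v : V0 // v ∉ V})
  | Sum.inl e => Sum.inl (r e)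
  | Sum.inr ⟨e, h⟩ => Sum.inr ⟨r e, h⟩

/-- The underlying (unprimed) edge of `G` below an edge of the extended graph `E(G)`. -/
def baseEdge (r : E1 → V0) (V : Set V0) : (E1 ⊕ {e : E1 // r e ∉ V}) → E1
  | Sum.inl e => e
  | Sum.inr ⟨e, _⟩ => e

open scoped Classical in
/-- The sets `B_w`, `w` a vertex of the extended graph: `B v = D v` for `v ∈ V`,
`B v = ⋃_{s e = v} R e` for `v ∉ V` and `B v' = D v \ ⋃_{s e = v} R e`. -/
noncomputable def Bext [MeasurableSpace X] (s : E1 → V0) (V : Set V0)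
    (R : E1 → Set X) (D : V0 → Set X) : (V0 ⊕ {v : V0 // v ∉ V}) → Set X
  | Sum.inl v => if v ∈ V then D v else ⋃ e ∈ {e' | s e' = v}, R e
  | Sum.inr ⟨v, _⟩ => D v \ ⋃ e ∈ {e' | s e' = v}, R e

open scoped Classical in
/-- The sets `Q_ε`, `ε` an edge of the extended graph: `Q e = R e` if `r e ∈ V`, and for
`r e = v ∉ V`, `Q e = (f_e⁻¹)⁻¹ (B v)` and `Q e' = (f_e⁻¹)⁻¹ (B v')` (preimages under
`f_e⁻¹`, whose domain is `R e`). -/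
noncomputable def Qext [MeasurableSpace X] (r s : E1 → V0) (V : Set V0)
    (R : E1 → Set X) (D : V0 → Set X) (finv : E1 → X → X) :
    (E1 ⊕ {e : E1 // r e ∉ V}) → Set X
  | Sum.inl e => if r e ∈ V then R e
      else R e ∩ finv e ⁻¹' (Bext s V R D (Sum.inl (r e)))
  | Sum.inr ⟨e, h⟩ => R e ∩ finv e ⁻¹' (Bext s V R D (Sum.inr ⟨r e, h⟩))

/-!
Every edge `ε` of `E(G)` satisfies `Q_ε = R_{ē} ∩ f_{ē}⁻¹ ⁻¹' B_{r_E ε}`, and `B_v`, `B_{v'}` cut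
`D_v` into two disjoint pieces. Pulling this partition back along `f_e⁻¹` cuts `R_e` into `Q_e` and
`Q_{e'}`, so the `Q_ε` over the edges leaving `v` have the same union as the `R_e`, which reduces
the Cuntz–Krieger relation of `E(G)` at `v` to the one of `G`, or to the definition of `B_v`.
Finally `B_{r_E ε}` lies in `D_{r(ē)}` up to a null set and `Q_ε ⊆ R_{ē}`, so the properties of the
maps are inherited by restriction.
-/

/-- The underlying (unprimed) vertex of `G` below a vertex of the extended graph `E(G)`, the
counterpart of `baseEdge` for vertices. -/
def baseVertex (V : Set V0) : (V0 ⊕ {v : V0 // v ∉ V}) → V0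
  | Sum.inl v => v
  | Sum.inr ⟨v, _⟩ => v

section ExtendedGraph

variable {r s : E1 → V0} {V : Set V0}

lemma baseVertex_rExt (ε : E1 ⊕ {e : E1 // r e ∉ V}) :
    baseVertex V (rExt r V ε) = r (baseEdge r V ε) := by
  rcases ε with e | ⟨e, he⟩ <;> rfl

lemma sExt_eq_inl (ε : E1 ⊕ {e : E1 // r e ∉ V}) :
    sExt r s V ε = Sum.inl (s (baseEdge r V ε)) := by
  rcases ε with e | ⟨e, he⟩ <;> rfl

lemma rExt_ne_of_baseEdge_eq {ε ε' : E1 ⊕ {e : E1 // r e ∉ V}} (hne : ε ≠ ε')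
    (hbase : baseEdge r V ε = baseEdge r V ε') : rExt r V ε ≠ rExt r V ε' := by
  rcases ε with e | ⟨e, he⟩ <;> rcases ε' with e' | ⟨e', he'⟩ <;> obtain rfl := hbase
  · exact absurd rfl hne
  · exact Sum.inl_ne_inr
  · exact Sum.inr_ne_inl
  · exact absurd rfl hne

end ExtendedGraph

section VertexSets

variable [MeasurableSpace X] {s : E1 → V0} {V : Set V0} {R : E1 → Set X} {D : V0 → Set X} {v : V0}

lemma bext_inl_of_mem (hv : v ∈ V) : Bext s V R D (Sum.inl v) = D v :=
  if_pos hv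

lemma bext_inl_of_notMem (hv : v ∉ V) :
    Bext s V R D (Sum.inl v) = ⋃ e ∈ {e | s e = v}, R e :=
  if_neg hv

lemma disjoint_bext_inl_bext_inr (hv : v ∉ V) :
    Disjoint (Bext s V R D (Sum.inl v)) (Bext s V R D (Sum.inr ⟨v, hv⟩)) := by
  rw [bext_inl_of_notMem hv]
  exact disjoint_sdiff_right

lemma disjoint_bext_of_baseVertex_eq {w w' : V0 ⊕ {v : V0 // v ∉ V}} (hne : w ≠ w')
    (hbase : baseVertex V w = baseVertex V w') :
    Disjoint (Bext s V R D w) (Bext s V R D w') := by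
  rcases w with v | ⟨v, hv⟩ <;> rcases w' with v' | ⟨v', hv'⟩ <;> obtain rfl := hbase
  · exact absurd rfl hne
  · exact disjoint_bext_inl_bext_inr hv'
  · exact (disjoint_bext_inl_bext_inr hv).symm
  · exact absurd rfl hne

lemma subset_bext_inl_union_bext_inr (hv : v ∉ V) :
    D v ⊆ Bext s V R D (Sum.inl v) ∪ Bext s V R D (Sum.inr ⟨v, hv⟩) := by
  rw [bext_inl_of_notMem hv]
  exact subset_union_right.trans union_sdiff_self.superset

end VertexSets

lemma map_restrict_absolutelyContinuous_of_ae_le {α β : Type*} [MeasurableSpace α]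
    [MeasurableSpace β] {μ : Measure α} {ν : Measure β} {A B : Set α} {g : α → β}
    (hAB : A ≤ᵐ[μ] B) (hg : Measurable g) (hB : (μ.restrict B).map g ≪ ν) :
    (μ.restrict A).map g ≪ ν :=
  (Measure.map_mono (Measure.restrict_mono_ae hAB) hg).absolutelyContinuous.trans hB

namespace RelBranchingSystem

variable [MeasurableSpace X] {μ : Measure X} {r s : E1 → V0} {V : Set V0}
  {R : E1 → Set X} {D : V0 → Set X} {f finv : E1 → X → X}

lemma measurableSet_bext (hbs : RelBranchingSystem r s V μ R D f finv)
    (hcount : ∀ v ∉ V, {e | s e = v}.Countable) (w : V0 ⊕ {v : V0 // v ∉ V}) :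
    MeasurableSet (Bext s V R D w) := by
  have measurableSet_biUnion (v) (hv : v ∉ V) : MeasurableSet (⋃ e ∈ {e | s e = v}, R e) :=
    .biUnion (hcount v hv) fun e _ ↦ hbs.measR e
  rcases w with v | ⟨v, hv⟩
  · by_cases hv : v ∈ V
    · rw [bext_inl_of_mem hv]
      exact hbs.measD v
    · rw [bext_inl_of_notMem hv]
      exact measurableSet_biUnion v hv
  · exact (hbs.measD v).diff (measurableSet_biUnion v hv)

lemma biUnion_ae_le (hbs : RelBranchingSystem r s V μ R D f finv) {v : V0}
    (hcount : {e | s e = v}.Countable) : (⋃ e ∈ {e | s e = v}, R e : Set X) ≤ᵐ[μ] D v := by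
  simp only [ae_le_set, iUnion_sdiff, measure_biUnion_null_iff hcount]
  rintro e rfl
  exact hbs.RsubD e

lemma bext_ae_le (hbs : RelBranchingSystem r s V μ R D f finv)
    (hcount : ∀ v ∉ V, {e | s e = v}.Countable) (w : V0 ⊕ {v : V0 // v ∉ V}) :
    Bext s V R D w ≤ᵐ[μ] D (baseVertex V w) := by
  rcases w with v | ⟨v, _⟩
  · by_cases hv : v ∈ V
    · exact (bext_inl_of_mem hv).subset.eventuallyLE
    · rw [bext_inl_of_notMem hv]
      exact hbs.biUnion_ae_le (hcount v hv)
  · exact sdiff_subset.eventuallyLE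

lemma bext_rExt_ae_le (hbs : RelBranchingSystem r s V μ R D f finv)
    (hcount : ∀ v ∉ V, {e | s e = v}.Countable) (ε : E1 ⊕ {e : E1 // r e ∉ V}) :
    Bext s V R D (rExt r V ε) ≤ᵐ[μ] D (r (baseEdge r V ε)) := by
  simpa only [baseVertex_rExt] using hbs.bext_ae_le hcount (rExt r V ε)

lemma measure_bext_inter_bext (hbs : RelBranchingSystem r s V μ R D f finv)
    (hcount : ∀ v ∉ V, {e | s e = v}.Countable) {w w' : V0 ⊕ {v : V0 // v ∉ V}} (hne : w ≠ w') :
    μ (Bext s V R D w ∩ Bext s V R D w') = 0 := by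
  by_cases hbase : baseVertex V w = baseVertex V w'
  · rw [(disjoint_bext_of_baseVertex_eq hne hbase).inter_eq, measure_empty]
  · exact measure_mono_null_ae ((hbs.bext_ae_le hcount w).inter (hbs.bext_ae_le hcount w'))
      (hbs.disjD _ _ hbase)

lemma ae_le_bext_inl (hbs : RelBranchingSystem r s V μ R D f finv) (e : E1) :
    R e ≤ᵐ[μ] Bext s V R D (Sum.inl (s e)) := by
  by_cases hv : s e ∈ V
  · rw [bext_inl_of_mem hv]
    exact ae_le_set.2 (hbs.RsubD e)
  · rw [bext_inl_of_notMem hv]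
    exact (subset_biUnion_of_mem (s := {e' | s e' = s e}) (u := R) rfl).eventuallyLE

lemma bext_inl_ae_eq_biUnion (hbs : RelBranchingSystem r s V μ R D f finv) (e : E1) :
    Bext s V R D (Sum.inl (s e)) =ᵐ[μ] (⋃ e' ∈ {e' | s e' = s e}, R e' : Set X) := by
  by_cases hv : s e ∈ V
  · rw [bext_inl_of_mem hv]
    exact measure_symmDiff_eq_zero_iff.1 (hbs.CK _ hv ⟨e, rfl⟩)
  · exact (bext_inl_of_notMem hv).eventuallyEq

lemma qext_eq_inter_preimage (hbs : RelBranchingSystem r s V μ R D f finv)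
    (ε : E1 ⊕ {e : E1 // r e ∉ V}) :
    Qext r s V R D finv ε =
      R (baseEdge r V ε) ∩ finv (baseEdge r V ε) ⁻¹' Bext s V R D (rExt r V ε) := by
  rcases ε with e | ⟨e, he⟩
  · by_cases hv : r e ∈ V
    · simp only [Qext, baseEdge, rExt, if_pos hv, bext_inl_of_mem hv]
      exact (inter_eq_left.2 (hbs.mapsfinv e)).symm
    · exact if_neg hv
  · rfl

lemma qext_subset (hbs : RelBranchingSystem r s V μ R D f finv) (ε : E1 ⊕ {e : E1 // r e ∉ V}) :
    Qext r s V R D finv ε ⊆ R (baseEdge r V ε) := by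
  rw [hbs.qext_eq_inter_preimage]
  exact inter_subset_left

lemma mapsTo_finv_qext (hbs : RelBranchingSystem r s V μ R D f finv)
    (ε : E1 ⊕ {e : E1 // r e ∉ V}) :
    MapsTo (finv (baseEdge r V ε)) (Qext r s V R D finv ε) (Bext s V R D (rExt r V ε)) := by
  rw [hbs.qext_eq_inter_preimage]
  exact inter_subset_right

lemma measurableSet_qext (hbs : RelBranchingSystem r s V μ R D f finv)
    (hcount : ∀ v ∉ V, {e | s e = v}.Countable) (ε : E1 ⊕ {e : E1 // r e ∉ V}) :
    MeasurableSet (Qext r s V R D finv ε) := by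
  rw [hbs.qext_eq_inter_preimage]
  exact (hbs.measR _).inter (hbs.measfinv _ (hbs.measurableSet_bext hcount _))

lemma measure_qext_inter_qext (hbs : RelBranchingSystem r s V μ R D f finv)
    {ε ε' : E1 ⊕ {e : E1 // r e ∉ V}} (hne : ε ≠ ε') :
    μ (Qext r s V R D finv ε ∩ Qext r s V R D finv ε') = 0 := by
  by_cases hbase : baseEdge r V ε = baseEdge r V ε'
  · have bext_disjoint : Disjoint (Bext s V R D (rExt r V ε)) (Bext s V R D (rExt r V ε')) :=
      disjoint_bext_of_baseVertex_eq (rExt_ne_of_baseEdge_eq hne hbase)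
        (by rw [baseVertex_rExt, baseVertex_rExt, hbase])
    have qext_disjoint : Disjoint (Qext r s V R D finv ε) (Qext r s V R D finv ε') :=
      (bext_disjoint.preimage _).mono (hbs.mapsTo_finv_qext ε)
        (hbase ▸ hbs.mapsTo_finv_qext ε')
    rw [qext_disjoint.inter_eq, measure_empty]
  · exact measure_mono_null (inter_subset_inter (hbs.qext_subset ε) (hbs.qext_subset ε'))
      (hbs.disjR _ _ hbase)

lemma measure_qext_diff_bext_sExt (hbs : RelBranchingSystem r s V μ R D f finv)
    (ε : E1 ⊕ {e : E1 // r e ∉ V}) :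
    μ (Qext r s V R D finv ε \ Bext s V R D (sExt r s V ε)) = 0 := by
  rw [sExt_eq_inl]
  exact ae_le_set.1 ((hbs.qext_subset ε).eventuallyLE.trans (hbs.ae_le_bext_inl _))

lemma qext_inl_union_qext_inr (hbs : RelBranchingSystem r s V μ R D f finv) {e : E1}
    (he : r e ∉ V) :
    Qext r s V R D finv (Sum.inl e) ∪ Qext r s V R D finv (Sum.inr ⟨e, he⟩) = R e := by
  simp only [hbs.qext_eq_inter_preimage, baseEdge, rExt, ← inter_union_distrib_left,
    ← preimage_union, inter_eq_left]
  exact (hbs.mapsfinv e).mono_right (subset_bext_inl_union_bext_inr he)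

lemma biUnion_qext_baseEdge_eq (hbs : RelBranchingSystem r s V μ R D f finv) (e : E1) :
    ⋃ ε ∈ {ε | baseEdge r V ε = e}, Qext r s V R D finv ε = R e := by
  refine Subset.antisymm (iUnion₂_subset ?_) fun x hx ↦ ?_
  · rintro ε rfl
    exact hbs.qext_subset ε
  · by_cases he : r e ∈ V
    · exact mem_biUnion (x := Sum.inl e) rfl (by simpa only [Qext, if_pos he] using hx)
    · rw [← hbs.qext_inl_union_qext_inr he] at hx
      rcases hx with hx | hx
      · exact mem_biUnion (x := Sum.inl e) rfl hx
      · exact mem_biUnion (s := {ε | baseEdge r V ε = e}) (x := Sum.inr ⟨e, he⟩) rfl hx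

lemma biUnion_qext_sExt_eq_inl (hbs : RelBranchingSystem r s V μ R D f finv) (v : V0) :
    ⋃ ε ∈ {ε | sExt r s V ε = Sum.inl v}, Qext r s V R D finv ε =
      ⋃ e ∈ {e | s e = v}, R e := by
  ext x
  simp only [← hbs.biUnion_qext_baseEdge_eq, sExt_eq_inl, Sum.inl.injEq, mem_ofPred_eq,
    mem_iUnion, exists_prop]
  exact ⟨fun ⟨ε, hε, hx⟩ ↦ ⟨_, hε, ε, rfl, hx⟩, fun ⟨_, he, ε, hε, hx⟩ ↦ ⟨ε, hε ▸ he, hx⟩⟩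

lemma bext_sExt_ae_eq_biUnion_qext (hbs : RelBranchingSystem r s V μ R D f finv)
    (ε : E1 ⊕ {e : E1 // r e ∉ V}) :
    Bext s V R D (sExt r s V ε) =ᵐ[μ]
      (⋃ ε' ∈ {ε' | sExt r s V ε' = sExt r s V ε}, Qext r s V R D finv ε' : Set X) := by
  rw [sExt_eq_inl ε, hbs.biUnion_qext_sExt_eq_inl]
  exact hbs.bext_inl_ae_eq_biUnion _

lemma ae_finv_f_eq (hbs : RelBranchingSystem r s V μ R D f finv)
    (hcount : ∀ v ∉ V, {e | s e = v}.Countable) (ε : E1 ⊕ {e : E1 // r e ∉ V}) :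
    ∀ᵐ t ∂μ.restrict (Bext s V R D (rExt r V ε)),
      finv (baseEdge r V ε) (f (baseEdge r V ε) t) = t :=
  ae_mono (Measure.restrict_mono_ae (hbs.bext_rExt_ae_le hcount ε)) (hbs.inv_left _)

lemma ae_f_finv_eq (hbs : RelBranchingSystem r s V μ R D f finv)
    (ε : E1 ⊕ {e : E1 // r e ∉ V}) :
    ∀ᵐ x ∂μ.restrict (Qext r s V R D finv ε),
      f (baseEdge r V ε) (finv (baseEdge r V ε) x) = x :=
  ae_restrict_of_ae_restrict_of_subset (hbs.qext_subset ε) (hbs.inv_right _)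

lemma ae_f_mem_qext (hbs : RelBranchingSystem r s V μ R D f finv)
    (hcount : ∀ v ∉ V, {e | s e = v}.Countable) (ε : E1 ⊕ {e : E1 // r e ∉ V}) :
    ∀ᵐ t ∂μ.restrict (Bext s V R D (rExt r V ε)),
      f (baseEdge r V ε) t ∈ Qext r s V R D finv ε := by
  filter_upwards [hbs.ae_finv_f_eq hcount ε, ae_restrict_mem (hbs.measurableSet_bext hcount _),
    ae_restrict_of_ae (hbs.bext_rExt_ae_le hcount ε)] with t finv_f_t ht bext_le
  rw [hbs.qext_eq_inter_preimage]
  exact ⟨hbs.mapsf _ (bext_le ht), by rwa [mem_preimage, finv_f_t]⟩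

lemma ae_finv_mem_bext (hbs : RelBranchingSystem r s V μ R D f finv)
    (hcount : ∀ v ∉ V, {e | s e = v}.Countable) (ε : E1 ⊕ {e : E1 // r e ∉ V}) :
    ∀ᵐ x ∂μ.restrict (Qext r s V R D finv ε),
      finv (baseEdge r V ε) x ∈ Bext s V R D (rExt r V ε) :=
  ae_restrict_of_forall_mem (hbs.measurableSet_qext hcount ε) (hbs.mapsTo_finv_qext ε)

lemma map_f_restrict_bext_absolutelyContinuous (hbs : RelBranchingSystem r s V μ R D f finv)
    (hcount : ∀ v ∉ V, {e | s e = v}.Countable) (ε : E1 ⊕ {e : E1 // r e ∉ V}) :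
    (μ.restrict (Bext s V R D (rExt r V ε))).map (f (baseEdge r V ε)) ≪ μ :=
  map_restrict_absolutelyContinuous_of_ae_le (hbs.bext_rExt_ae_le hcount ε) (hbs.measf _)
    (hbs.ac_f _)

lemma map_finv_restrict_qext_absolutelyContinuous (hbs : RelBranchingSystem r s V μ R D f finv)
    (ε : E1 ⊕ {e : E1 // r e ∉ V}) :
    (μ.restrict (Qext r s V R D finv ε)).map (finv (baseEdge r V ε)) ≪ μ :=
  map_restrict_absolutelyContinuous_of_ae_le (hbs.qext_subset ε).eventuallyLE (hbs.measfinv _)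
    (hbs.ac_finv _)

end RelBranchingSystem

theorem statement5_general [MeasurableSpace X] {μ : Measure X}
    (r s : E1 → V0) (V : Set V0)
    (R : E1 → Set X) (D : V0 → Set X) (f finv : E1 → X → X)
    (hbs : RelBranchingSystem r s V μ R D f finv)
    (hcount : ∀ v ∉ V, {e | s e = v}.Countable) :
    (∀ ε ε', ε ≠ ε' →
      μ (Qext r s V R D finv ε ∩ Qext r s V R D finv ε') = 0) ∧
    (∀ w w', w ≠ w' → μ (Bext s V R D w ∩ Bext s V R D w') = 0) ∧
    (∀ ε, μ (Qext r s V R D finv ε \ Bext s V R D (sExt r s V ε)) = 0) ∧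
    (∀ w, (∃ ε, sExt r s V ε = w) →
      μ (symmDiff (Bext s V R D w)
        (⋃ ε ∈ {ε' | sExt r s V ε' = w}, Qext r s V R D finv ε)) = 0) ∧
    (∀ e, ∀ h : r e ∉ V,
      μ (symmDiff (R e)
        (Qext r s V R D finv (Sum.inl e) ∪ Qext r s V R D finv (Sum.inr ⟨e, h⟩))) = 0) ∧
    (∀ ε,
      (∀ᵐ t ∂μ.restrict (Bext s V R D (rExt r V ε)),
        f (baseEdge r V ε) t ∈ Qext r s V R D finv ε) ∧
      (∀ᵐ x ∂μ.restrict (Qext r s V R D finv ε),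
        finv (baseEdge r V ε) x ∈ Bext s V R D (rExt r V ε)) ∧
      (∀ᵐ x ∂μ.restrict (Qext r s V R D finv ε),
        f (baseEdge r V ε) (finv (baseEdge r V ε) x) = x) ∧
      (∀ᵐ t ∂μ.restrict (Bext s V R D (rExt r V ε)),
        finv (baseEdge r V ε) (f (baseEdge r V ε) t) = t) ∧
      ((μ.restrict (Bext s V R D (rExt r V ε))).map (f (baseEdge r V ε)) ≪ μ) ∧
      ((μ.restrict (Qext r s V R D finv ε)).map (finv (baseEdge r V ε)) ≪ μ)) := by
  refine ⟨fun _ _ ↦ hbs.measure_qext_inter_qext, fun _ _ ↦ hbs.measure_bext_inter_bext hcount,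
    hbs.measure_qext_diff_bext_sExt, ?cuntzKrieger, fun e he ↦ ?splitting, fun ε ↦
    ⟨hbs.ae_f_mem_qext hcount ε, hbs.ae_finv_mem_bext hcount ε, hbs.ae_f_finv_eq ε,
      hbs.ae_finv_f_eq hcount ε, hbs.map_f_restrict_bext_absolutelyContinuous hcount ε,
      hbs.map_finv_restrict_qext_absolutelyContinuous ε⟩⟩
  case cuntzKrieger =>
    rintro _ ⟨ε, rfl⟩
    exact measure_symmDiff_eq_zero_iff.2 (hbs.bext_sExt_ae_eq_biUnion_qext ε)
  case splitting =>
    rw [hbs.qext_inl_union_qext_inr he, symmDiff_self, bot_eq_empty, measure_empty]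

/-- The family `{Q_ε, B_w}` together with the maps `g_ε = f_{ē}` is a
branching system for the extended graph `E(G)`, with the Cuntz–Krieger condition at every
vertex:  (1) the `Q_ε` are pairwise a.e. disjoint;  (2) the `B_w` are pairwise a.e.
disjoint;  (3) `Q_ε ⊆ B_{s_E ε}` up to a null set;  (4) for every vertex `w` emitting at
least one edge, `B_w = ⋃_{s_E ε = w} Q_ε` up to a null set (in particular, for
`r e ∉ V`, `R e` coincides up to a null set with `Q_e ∪ Q_{e'}`);  (5) for every edge
`ε`, the restriction of `f_{ē}` gives maps `B_{r_E ε} → Q_ε` and `Q_ε → B_{r_E ε}` that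
are mutually inverse `μ`-a.e. and whose pushforward measures are absolutely continuous
with respect to `μ`. -/
theorem statement5 [MeasurableSpace X] {μ : Measure X} [SigmaFinite μ]
    (r s : E1 → V0) [Fintype V0] [Fintype E1] (V : Set V0)
    (R : E1 → Set X) (D : V0 → Set X) (f finv : E1 → X → X)
    (hbs : RelBranchingSystem r s V μ R D f finv) :
    (∀ ε ε', ε ≠ ε' →
      μ (Qext r s V R D finv ε ∩ Qext r s V R D finv ε') = 0) ∧
    (∀ w w', w ≠ w' → μ (Bext s V R D w ∩ Bext s V R D w') = 0) ∧
    (∀ ε, μ (Qext r s V R D finv ε \ Bext s V R D (sExt r s V ε)) = 0) ∧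
    (∀ w, (∃ ε, sExt r s V ε = w) →
      μ (symmDiff (Bext s V R D w)
        (⋃ ε ∈ {ε' | sExt r s V ε' = w}, Qext r s V R D finv ε)) = 0) ∧
    (∀ e, ∀ h : r e ∉ V,
      μ (symmDiff (R e)
        (Qext r s V R D finv (Sum.inl e) ∪ Qext r s V R D finv (Sum.inr ⟨e, h⟩))) = 0) ∧
    (∀ ε,
      (∀ᵐ t ∂μ.restrict (Bext s V R D (rExt r V ε)),
        f (baseEdge r V ε) t ∈ Qext r s V R D finv ε) ∧
      (∀ᵐ x ∂μ.restrict (Qext r s V R D finv ε),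
        finv (baseEdge r V ε) x ∈ Bext s V R D (rExt r V ε)) ∧
      (∀ᵐ x ∂μ.restrict (Qext r s V R D finv ε),
        f (baseEdge r V ε) (finv (baseEdge r V ε) x) = x) ∧
      (∀ᵐ t ∂μ.restrict (Bext s V R D (rExt r V ε)),
        finv (baseEdge r V ε) (f (baseEdge r V ε) t) = t) ∧
      ((μ.restrict (Bext s V R D (rExt r V ε))).map (f (baseEdge r V ε)) ≪ μ) ∧
      ((μ.restrict (Qext r s V R D finv ε)).map (finv (baseEdge r V ε)) ≪ μ)) := by
  exact statement5_general r s V R D f finv hbs fun _ _ ↦ to_countable _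

end
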